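/- arXiv:2212.14600 — 2 statements merged into one kernel-verified Lean document; each statement's English description precedes it below -/
import Mathlib

section
/- Let $k$ be a commutative ring, let $G$ be a group, and let $n$ be a positive integer. If $n$ annihilates $H^1(G, M)$ for every representation $M$ of $G$ over $k$, then $n$ annihilates $H^i(G, M)$ for every $i \geq 1$ and every representation $M$ of $G$ over $k$. -/
/-! Every representation embeds in one coinduced from the trivial subgroup, whose cohomology
vanishes in positive degrees by Shapiro's lemma. The connecting homomorphism therefore maps
`Hⁱ` of the cokernel onto `Hⁱ⁺¹` of the original representation. -/

universe u

open CategoryTheory CategoryTheory.Limits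

section

variable {k G : Type u} [CommRing k] [Group G]

theorem isZero_groupCohomology_coind_succ_of_subsingleton (S : Subgroup G) [Subsingleton S]
    (A : Rep.{u} k S) (i : ℕ) : IsZero (groupCohomology (Rep.coind S.subtype A) (i + 1)) :=
  (isZero_groupCohomology_succ_of_subsingleton A i).of_iso (groupCohomology.coindIso A (i + 1))

theorem exists_mono_isZero_groupCohomology_succ (M : Rep.{u} k G) :
    ∃ (I : Rep.{u} k G) (f : M ⟶ I), Mono f ∧ ∀ i, IsZero (groupCohomology I (i + 1)) :=
  -- The unit of the adjunction is a monomorphism because restriction is faithful.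
  ⟨_, (Rep.resCoindAdjunction.{u} k (⊥ : Subgroup G).subtype).unit.app M, inferInstance,
    isZero_groupCohomology_coind_succ_of_subsingleton ⊥ _⟩

theorem smul_groupCohomology_succ_eq_zero_of_shortExact {X : ShortComplex (Rep.{u} k G)}
    (hX : X.ShortExact) {i : ℕ} (hX₂ : IsZero (groupCohomology X.X₂ (i + 1))) {r : k}
    (hX₃ : ∀ y : groupCohomology X.X₃ i, r • y = 0) (x : groupCohomology X.X₁ (i + 1)) :
    r • x = 0 := by
  have δ_surjective : Function.Surjective (groupCohomology.δ hX i (i + 1) rfl) :=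
    (ModuleCat.epi_iff_surjective _).mp (groupCohomology.epi_δ_of_isZero hX i hX₂)
  obtain ⟨y, rfl⟩ := δ_surjective x
  rw [← map_smul, hX₃, map_zero]

theorem smul_groupCohomology_succ_eq_zero {r : k} {i : ℕ}
    (h : ∀ (M : Rep.{u} k G) (x : groupCohomology M i), r • x = 0)
    (M : Rep.{u} k G) (x : groupCohomology M (i + 1)) : r • x = 0 := by
  obtain ⟨I, f, hf, hI⟩ := exists_mono_isZero_groupCohomology_succ M
  have hX : (ShortComplex.mk f (cokernel.π f) (cokernel.condition f)).ShortExact :=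
    .mk' (ShortComplex.exact_cokernel f) hf inferInstance
  exact smul_groupCohomology_succ_eq_zero_of_shortExact hX (hI i) (h (cokernel f)) x

theorem smul_groupCohomology_eq_zero_of_smul_one_general {r : k} {m : ℕ}
    (h : ∀ (M : Rep.{u} k G) (x : groupCohomology M m), r • x = 0)
    {i : ℕ} (hi : m ≤ i) (M : Rep.{u} k G) (x : groupCohomology M i) : r • x = 0 := by
  induction i, hi using Nat.le_induction generalizing M with
  | base => exact h M x
  | succ i _ ih => exact smul_groupCohomology_succ_eq_zero ih M x

end

/-- Let `k` be a commutative ring, `G` a group and `n` a positive integer. If `n` annihilates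
`H¹(G, M)` for every representation `M` of `G` over `k`, then `n` annihilates `Hⁱ(G, M)` for
every `i ≥ 1` and every representation `M`. -/
theorem smul_groupCohomology_eq_zero_of_smul_one {k G : Type} [CommRing k] [Group G]
    (n : ℕ) (hn : 0 < n)
    (h1 : ∀ (M : Rep k G) (x : groupCohomology M 1), (n : ℤ) • x = 0)
    (i : ℕ) (hi : 1 ≤ i) (M : Rep k G) (x : groupCohomology M i) :
    (n : ℤ) • x = 0 := by
  simp only [← Int.cast_smul_eq_zsmul k] at h1 ⊢
  exact smul_groupCohomology_eq_zero_of_smul_one_general h1 hi M x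
end

section
/- Let $k$ be a noetherian commutative ring, let $A$ be a commutative $k$-algebra that is finitely generated as a $k$-algebra, and let $G$ be a finite group acting on $A$ by $k$-algebra automorphisms. Then the invariant subalgebra $A^G = \{a \in A : g \cdot a = a \text{ for all } g \in G\}$ is a finitely generated $k$-algebra. -/
/-!
Every `a : A` is a root of the monic polynomial `∏ g, (X - g • a)`, whose coefficients are
invariant, so `A` is integral over any subalgebra containing `A^G`. Being also of finite type over
such a subalgebra, `A` is a finite module over it, and the Artin–Tate lemma applies.
-/

theorem finiteType_of_isIntegral (k B A : Type*) [CommRing k] [IsNoetherianRing k]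
    [CommRing B] [CommRing A] [Algebra k B] [Algebra B A] [Algebra k A] [IsScalarTower k B A]
    [FaithfulSMul B A] [Algebra.FiniteType k A] [Algebra.IsIntegral B A] :
    Algebra.FiniteType k B := by
  have : Algebra.FiniteType B A := .of_restrictScalars_finiteType k B A
  have : Module.Finite B A := Algebra.IsIntegral.finite
  exact ⟨fg_of_fg_of_fg k B A Algebra.FiniteType.out Module.Finite.fg_top
    (FaithfulSMul.algebraMap_injective B A)⟩

section FixedPoints

variable {k A G : Type*} [CommRing k] [CommRing A] [Algebra k A]
  [Group G] [Finite G] [MulSemiringAction G A]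

theorem isIntegral_of_fixedPoints_subset (B : Subalgebra k A)
    (hB : MulAction.fixedPoints G A ⊆ B) : Algebra.IsIntegral B A := by
  have : Algebra.IsInvariant B A G := ⟨fun a ha ↦ ⟨⟨a, hB ha⟩, rfl⟩⟩
  exact Algebra.IsInvariant.isIntegral B A G

theorem invariants_finiteType_general [IsNoetherianRing k] [Algebra.FiniteType k A]
    (B : Subalgebra k A) (hB : MulAction.fixedPoints G A ⊆ B) : Algebra.FiniteType k B := by
  have : Algebra.IsIntegral B A := isIntegral_of_fixedPoints_subset B hB
  exact finiteType_of_isIntegral k B A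

end FixedPoints

/-- Let `k` be a noetherian commutative ring, `A` a finitely generated commutative `k`-algebra,
and `G` a finite group acting on `A` by `k`-algebra automorphisms. Then the invariant
subalgebra `A^G` is a finitely generated `k`-algebra. -/
theorem invariants_finiteType {k A G : Type} [CommRing k] [IsNoetherianRing k]
    [CommRing A] [Algebra k A] [Algebra.FiniteType k A] [Group G] [Fintype G]
    (ρ : G →* (A ≃ₐ[k] A)) :
    Algebra.FiniteType k
      { carrier := {a : A | ∀ g : G, ρ g a = a}
        mul_mem' := fun {x y} hx hy g => by simp [map_mul, hx g, hy g]
        add_mem' := fun {x y} hx hy g => by simp [map_add, hx g, hy g]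
        algebraMap_mem' := fun r g => by simp : Subalgebra k A } := by
  let := MulSemiringAction.compHom A ρ
  exact invariants_finiteType_general (G := G) _ subset_rfl
end
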